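/- Let (E,ℒ,ℬ) be a weakly left-resolving labelled space with ℬ closed under relative complements. For every finite subset F ⊆ E(S)∖{0} there exists a finite subset F' ⊆ E(S)∖{0} such that: (a) for all u,v ∈ F', uv = 0 or u ≤ v or v ≤ u; (b) for every (α,A,α) ∈ F there exist (α,A₁,α),…,(α,A_n,α) ∈ F' with A = A₁ ∪ … ∪ A_n; (c) the set of labelled paths appearing as the word of an element of F' equals the set of labelled paths appearing as the word of an element of F; (d) if (α,A,α),(α,B,α) ∈ F' and A ≠ B, then A ∩ B = ∅. -/

import Mathlib

/-!
For a word `α`, let `𝒢 α` be the finite collection of all relative ranges `r(X, γ)` with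
`(β, X, β) ∈ F` and `α = βγ`. The refinement consists of the atoms of the Boolean algebra generated
by `𝒢 α` that lie inside some `X` with `(α, X, α) ∈ F`, for `α` ranging over the words of `F`.
An atom is obtained from such an `X` by finitely many intersections and relative complements,
hence lies in `ℬ` (`LabelledSpace.atom_mem`). Atoms at the same word are disjoint or equal, and
every `X` in `F` is the union of the atoms of its points.

The point is comparability along `α = βγ`: an atom `B` at `α` that meets `r(A, γ)`, for an atom `A`
at `β`, is contained in it. Weak left-resolution together with relative complements makes
`r(·, γ)` a homomorphism of Boolean rings, and `r(r(X, δ), γ) = r(X, δγ)` shows that it maps `𝒢 β`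
into `𝒢 α`; so `r(A, γ)` is a Boolean combination of members of `𝒢 α`. The lemma
`LabelledSpace.atom_subset_relR` carries this out pointwise.
-/

open Set

/-- A filter in the sub-poset `P` of a powerset, ordered by inclusion, with least
element `∅`: nonempty, upward-closed within `P`, downward-directed, not containing `∅`. -/
def IsFilterIn {V : Type*} (P F : Set (Set V)) : Prop :=
  F ⊆ P ∧ F.Nonempty ∧ ∅ ∉ F ∧
    (∀ X ∈ F, ∀ Y ∈ P, X ⊆ Y → Y ∈ F) ∧
    (∀ X ∈ F, ∀ Y ∈ F, ∃ Z ∈ F, Z ⊆ X ∧ Z ⊆ Y)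

/-- An ultrafilter in `P` is a maximal filter in `P`. -/
def IsUltrafilterIn {V : Type*} (P F : Set (Set V)) : Prop :=
  IsFilterIn P F ∧ ∀ G : Set (Set V), IsFilterIn P G → F ⊆ G → G = F

/-- A labelled graph: a directed graph with source, range and a surjective labelling map. -/
structure LGraph (V Edg A : Type*) where
  src : Edg → V
  rng : Edg → V
  lbl : Edg → A
  lbl_surj : Function.Surjective lbl

namespace LGraph

variable {V Edg A : Type*} (G : LGraph V Edg A)

/-- A finite path: a list of composable edges. -/
def IsPath (p : List Edg) : Prop := p.Chain' fun e f => G.rng e = G.src f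

/-- The relative range `r(S, α)`, with the convention `r(S, ω) = S`. -/
def relR (S : Set V) : List A → Set V
  | [] => S
  | a :: w =>
      {v | ∃ p : List Edg, G.IsPath p ∧ p.map G.lbl = a :: w ∧
        ∃ h : p ≠ [], G.src (p.head h) ∈ S ∧ G.rng (p.getLast h) = v}

/-- `α ∈ ℒ*(E)` : a finite labelled path (including the empty word). -/
def IsLbl (α : List A) : Prop := ∃ p : List Edg, G.IsPath p ∧ p.map G.lbl = α

/-- An infinite labelled path. -/
def IsLblInf (α : ℕ → A) : Prop :=
  ∃ p : ℕ → Edg, (∀ n, G.rng (p n) = G.src (p (n + 1))) ∧ ∀ n, G.lbl (p n) = α n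

end LGraph

/-- A labelled space: a labelled graph together with an accommodating family `ℬ`. -/
structure LabelledSpace (V Edg A : Type*) extends LGraph V Edg A where
  ℬ : Set (Set V)
  inter_mem : ∀ ⦃X Y : Set V⦄, X ∈ ℬ → Y ∈ ℬ → X ∩ Y ∈ ℬ
  union_mem : ∀ ⦃X Y : Set V⦄, X ∈ ℬ → Y ∈ ℬ → X ∪ Y ∈ ℬ
  range_mem : ∀ α : List A, α ≠ [] → toLGraph.IsLbl α → toLGraph.relR Set.univ α ∈ ℬ
  relR_mem : ∀ ⦃X : Set V⦄, X ∈ ℬ → ∀ α : List A, toLGraph.IsLbl α → toLGraph.relR X α ∈ ℬ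

/-- Words of length `≤ ∞`: finite words are lists, infinite words are sequences. -/
abbrev LWord (A : Type*) := List A ⊕ (ℕ → A)

/-- The length of a word in `ℕ∞`. -/
def wlen {A : Type*} : LWord A → ℕ∞
  | .inl l => (l.length : ℕ∞)
  | .inr _ => (⊤ : ℕ∞)

/-- `α_{1,n}` : the initial subword of length `n`. -/
def wtake {A : Type*} : LWord A → ℕ → List A
  | .inl l, n => l.take n
  | .inr f, n => (List.range n).map f

/-- Concatenation of a finite word with a word. -/
def wappend {A : Type*} (α : List A) : LWord A → LWord A
  | .inl l => .inl (α ++ l)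
  | .inr f => .inr fun n => if h : n < α.length then α.get ⟨n, h⟩ else f (n - α.length)

namespace LabelledSpace

variable {V Edg A : Type*} (L : LabelledSpace V Edg A)

abbrev relR : Set V → List A → Set V := L.toLGraph.relR

abbrev IsLbl : List A → Prop := L.toLGraph.IsLbl

/-- `r(α)` : the range of a word. -/
def wr (α : List A) : Set V := L.relR Set.univ α

/-- Membership in `ℒ^{≤∞}(E)`. -/
def IsLWord : LWord A → Prop
  | .inl l => L.IsLbl l
  | .inr f => L.toLGraph.IsLblInf f

/-- Weakly left-resolving. -/
def WeaklyLeftResolving : Prop :=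
  ∀ ⦃X Y : Set V⦄, X ∈ L.ℬ → Y ∈ L.ℬ → ∀ α : List A, α ≠ [] →
    L.relR (X ∩ Y) α = L.relR X α ∩ L.relR Y α

/-- `ℬ` is closed under relative complements. -/
def ClosedUnderRelComplements : Prop :=
  ∀ ⦃X Y : Set V⦄, X ∈ L.ℬ → Y ∈ L.ℬ → X \ Y ∈ L.ℬ

/-- `ℬ_α = {A ∈ ℬ : A ⊆ r(α)}`. -/
def Bw (α : List A) : Set (Set V) := {X | X ∈ L.ℬ ∧ X ⊆ L.wr α}

/-- `X_α` : the set of ultrafilters in `ℬ_α`. -/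
def Xw (α : List A) : Set (Set (Set V)) := {F | IsUltrafilterIn (L.Bw α) F}

/-- `X_{(α)β} = {F ∈ X_β : r(αβ) ∈ F}`, with the convention `X_{(ω)β} = X_β`. -/
def XP (α β : List A) : Set (Set (Set V)) :=
  match α with
  | [] => L.Xw β
  | a :: l => {F | F ∈ L.Xw β ∧ L.wr ((a :: l) ++ β) ∈ F}

/-- `g_{(α)β}(F) = {C ∩ r(αβ) : C ∈ F}`. -/
def gmap (α β : List A) (F : Set (Set V)) : Set (Set V) :=
  {D | ∃ C ∈ F, D = C ∩ L.wr (α ++ β)}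

/-- `h_{[α]β}(F)` : the upward closure of `F` in `ℬ_β` (only depends on `β`). -/
def hmap (β : List A) (F : Set (Set V)) : Set (Set V) :=
  {D | D ∈ L.Bw β ∧ ∃ C ∈ F, C ⊆ D}

/-- `f_{β[γ]}(F) = {A ∈ ℬ_β : r(A,γ) ∈ F}`. -/
def fmap (β γ : List A) (F : Set (Set V)) : Set (Set V) :=
  {X | X ∈ L.Bw β ∧ L.relR X γ ∈ F}

/-- `X_α^{sink}`. -/
def Xsink (α : List A) : Set (Set (Set V)) :=
  {F | F ∈ L.Xw α ∧ ∀ b : A, ∃ X ∈ F, L.relR X [b] = ∅}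

/-- A complete family (of filters) for the word `w`. -/
def IsCompleteFamily (w : LWord A) (F : ℕ → Set (Set V)) : Prop :=
  (∀ n : ℕ, 0 < n → (n : ℕ∞) ≤ wlen w → IsFilterIn (L.Bw (wtake w n)) (F n)) ∧
  (IsFilterIn (L.Bw []) (F 0) ∨ F 0 = ∅) ∧
  ∀ n : ℕ, (n : ℕ∞) < wlen w →
    F n = {X | X ∈ L.Bw (wtake w n) ∧ L.relR X ((wtake w (n + 1)).drop n) ∈ F (n + 1)}

/-- A complete family of ultrafilters for the word `w`. -/
def IsCompleteUltraFamily (w : LWord A) (F : ℕ → Set (Set V)) : Prop :=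
  (∀ n : ℕ, 0 < n → (n : ℕ∞) ≤ wlen w → IsUltrafilterIn (L.Bw (wtake w n)) (F n)) ∧
  (IsUltrafilterIn (L.Bw []) (F 0) ∨ F 0 = ∅) ∧
  ∀ n : ℕ, (n : ℕ∞) < wlen w →
    F n = {X | X ∈ L.Bw (wtake w n) ∧ L.relR X ((wtake w (n + 1)).drop n) ∈ F (n + 1)}

/-- Membership in `E(S)`: `none` is the zero element, `some (α, X)` stands for `(α, X, α)`. -/
def ESmem : Option (List A × Set V) → Prop
  | none => True
  | some p => p.2 ∈ L.Bw p.1 ∧ p.2 ≠ ∅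

/-- `E(S) ∖ {0}`. -/
def ESnz : Set (Option (List A × Set V)) := {p | L.ESmem p ∧ p ≠ none}

/-- The natural order on `E(S)`: `(α,A,α) ≤ (β,B,β)` iff `α = βα'` and `A ⊆ r(B,α')`. -/
def ESle : Option (List A × Set V) → Option (List A × Set V) → Prop
  | none, _ => True
  | some _, none => False
  | some p, some q => ∃ γ : List A, p.1 = q.1 ++ γ ∧ p.2 ⊆ L.relR q.2 γ

open Classical in
/-- The product in the semilattice `E(S)`. -/
noncomputable def ESmul :
    Option (List A × Set V) → Option (List A × Set V) → Option (List A × Set V)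
  | none, _ => none
  | some _, none => none
  | some p, some q =>
    if p.1 <+: q.1 then
      if L.relR p.2 (q.1.drop p.1.length) ∩ q.2 = ∅ then none
      else some (q.1, L.relR p.2 (q.1.drop p.1.length) ∩ q.2)
    else if q.1 <+: p.1 then
      if p.2 ∩ L.relR q.2 (p.1.drop q.1.length) = ∅ then none
      else some (p.1, p.2 ∩ L.relR q.2 (p.1.drop q.1.length))
    else none

/-- A filter in `E(S)`. -/
def IsESFilter (ξ : Set (Option (List A × Set V))) : Prop :=
  ξ ⊆ L.ESnz ∧ ξ.Nonempty ∧
    (∀ p ∈ ξ, ∀ q, L.ESmem q → L.ESle p q → q ∈ ξ) ∧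
    (∀ p ∈ ξ, ∀ q ∈ ξ, ∃ z ∈ ξ, L.ESle z p ∧ L.ESle z q)

/-- `Z` is a cover for `x` in `E(S)`. -/
def ESCover (x : Option (List A × Set V)) (Z : Set (Option (List A × Set V))) : Prop :=
  (∀ z ∈ Z, L.ESmem z ∧ L.ESle z x) ∧
  ∀ y, L.ESmem y → y ≠ none → L.ESle y x → ∃ z ∈ Z, L.ESmul y z ≠ none

/-- A tight filter in `E(S)`: every finite cover of an element of the filter meets the filter. -/
def IsTightESFilter (ξ : Set (Option (List A × Set V))) : Prop :=
  L.IsESFilter ξ ∧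
    ∀ x ∈ ξ, ∀ Z : Set (Option (List A × Set V)), Z.Finite → L.ESCover x Z →
      (Z ∩ ξ).Nonempty

/-- The filter in `E(S)` associated with the pair `(w, F)` of a word together with a
(complete) family: `ξ = ⋃_n ⋃_{X ∈ F n} ↑(w_{1,n}, X)`. -/
def filterOf (w : LWord A) (F : ℕ → Set (Set V)) : Set (Option (List A × Set V)) :=
  {p | L.ESmem p ∧
    ∃ n : ℕ, (n : ℕ∞) ≤ wlen w ∧ ∃ X ∈ F n, L.ESle (some (wtake w n, X)) p}

/-- `ξ_n = {X : (w_{1,n}, X, w_{1,n}) ∈ ξ}`. -/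
def xiN (_L : LabelledSpace V Edg A) (w : LWord A) (ξ : Set (Option (List A × Set V)))
    (n : ℕ) : Set (Set V) :=
  {X | some (wtake w n, X) ∈ ξ}

/-- `T_w` : the tight filters in `E(S)` whose associated word is `w`. -/
def Tw (w : LWord A) : Set (Set (Option (List A × Set V))) :=
  {ξ | L.IsTightESFilter ξ ∧
    ∃ F : ℕ → Set (Set V), L.IsCompleteFamily w F ∧ ξ = L.filterOf w F}

/-- `T_{(α)w} = {ξ ∈ T_w : ξ₀ is an ultrafilter in ℬ with r(α) ∈ ξ₀}`, with
`T_{(ω)w} = T_w`. -/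
def TwP (α : List A) (w : LWord A) : Set (Set (Option (List A × Set V))) :=
  match α with
  | [] => L.Tw w
  | a :: l =>
    {ξ | ξ ∈ L.Tw w ∧ IsUltrafilterIn (L.Bw []) (L.xiN w ξ 0) ∧ L.wr (a :: l) ∈ L.xiN w ξ 0}

/-- The family `{J_i}` for `αw` built from a family `{F_n}` for `w`:
`J_{|α|+n} = g_{(α)w_{1,n}}(F_n)` for `1 ≤ n ≤ |w|` and
`J_i = f_{α_{1,i}[α_{i+1,|α|}w₁]}(J_{|α|+1})` for `0 ≤ i ≤ |α|`
(reading `J_{|α|} = g_{(α)ω}(F₀)` and `J_i = f_{α_{1,i}[α_{i+1,|α|}]}(J_{|α|})` when `w = ω`). -/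
def Jfamily (α : List A) (w : LWord A) (F : ℕ → Set (Set V)) : ℕ → Set (Set V) :=
  match w with
  | .inl [] => fun i =>
      if i < α.length then L.fmap (α.take i) (α.drop i) (L.gmap α [] (F 0))
      else L.gmap α [] (F 0)
  | w => fun i =>
      if i ≤ α.length then
        L.fmap (α.take i) (α.drop i ++ wtake w 1) (L.gmap α (wtake w 1) (F 1))
      else L.gmap α (wtake w (i - α.length)) (F (i - α.length))

/-- `G_{(α)w}` as an operation on filters in `E(S)`. -/
def Gmap (α : List A) (w : LWord A) (ξ : Set (Option (List A × Set V))) :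
    Set (Option (List A × Set V)) :=
  L.filterOf (wappend α w) (L.Jfamily α w (L.xiN w ξ))

/-- The family `{η_n}` for `w` built from a family for `αw`:
`η_n = h_{[α]w_{1,n}}(F_{|α|+n})`. -/
def Hfam (α : List A) (w : LWord A) (F : ℕ → Set (Set V)) : ℕ → Set (Set V) :=
  fun n => L.hmap (wtake w n) (F (α.length + n))

/-- `H_{[α]w}` as an operation on filters in `E(S)`. -/
def Hmap (α : List A) (w : LWord A) (ξ : Set (Option (List A × Set V))) :
    Set (Option (List A × Set V)) :=
  L.filterOf w (L.Hfam α w (L.xiN (wappend α w) ξ))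

end LabelledSpace

/-- The topology of pointwise convergence on sets of subsets of `V`
(product topology with discrete coordinates, via indicator functions). -/
def memTopology (V : Type*) : TopologicalSpace (Set (Set V)) :=
  show TopologicalSpace (Set V → Prop) from
    @Pi.topologicalSpace (Set V) (fun _ => Prop) (fun _ => ⊥)


/-! ### Relative ranges -/

namespace LGraph

variable {V Edg A : Type*} (G : LGraph V Edg A)

lemma relR_mono {S T : Set V} (h : S ⊆ T) (α : List A) : G.relR S α ⊆ G.relR T α := by
  cases α with
  | nil => exact h
  | cons a w =>
    rintro v ⟨p, hp, hm, hne, hs, hr⟩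
    exact ⟨p, hp, hm, hne, h hs, hr⟩

lemma relR_empty (α : List A) : G.relR ∅ α = ∅ := by
  cases α with
  | nil => rfl
  | cons a w =>
    ext v
    simp [relR]

/-- A relative range can be computed one letter at a time. -/
lemma relR_cons (S : Set V) (a : A) (w : List A) :
    G.relR S (a :: w) = G.relR {v | ∃ e, G.lbl e = a ∧ G.src e ∈ S ∧ G.rng e = v} w := by
  ext v
  cases w with
  | nil =>
    constructor
    · rintro ⟨p, hp, hm, hne, hs, hr⟩
      obtain ⟨e, rfl, he⟩ := List.map_eq_singleton_iff.1 hm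
      exact ⟨e, he, hs, hr⟩
    · rintro ⟨e, he, hs, hr⟩
      exact ⟨[e], List.isChain_singleton e, by simp [he], by simp, hs, hr⟩
  | cons b w =>
    constructor
    · rintro ⟨p, hp, hm, hne, hs, hr⟩
      obtain ⟨e, q, rfl, he, hq⟩ := List.map_eq_cons_iff.1 hm
      obtain ⟨f, q, rfl, hf, hq'⟩ := List.map_eq_cons_iff.1 hq
      have hc := List.isChain_cons_cons.1 hp
      refine ⟨f :: q, hc.2, hq, by simp, ⟨e, he, hs, hc.1⟩, ?_⟩
      simpa using hr
    · rintro ⟨p, hp, hm, hne, ⟨e, he, hs, hc⟩, hr⟩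
      obtain ⟨f, q, rfl, hf, hq'⟩ := List.map_eq_cons_iff.1 hm
      refine ⟨e :: f :: q, List.isChain_cons_cons.2 ⟨hc, hp⟩, ?_, by simp, hs, ?_⟩
      · rw [List.map_cons, hm, he]
      · simpa using hr

lemma relR_relR (S : Set V) (α β : List A) :
    G.relR (G.relR S α) β = G.relR S (α ++ β) := by
  induction α generalizing S with
  | nil => rfl
  | cons a w ih => rw [relR_cons, ih, List.cons_append, relR_cons]

lemma exists_of_mem_relR {S : Set V} {α : List A} {v : V} (h : v ∈ G.relR S α) :
    ∃ x ∈ S, v ∈ G.relR {x} α := by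
  cases α with
  | nil => exact ⟨v, h, rfl⟩
  | cons a w =>
    obtain ⟨p, hp, hm, hne, hs, hr⟩ := h
    exact ⟨_, hs, p, hp, hm, hne, rfl, hr⟩

lemma isLbl_of_mem_relR {S : Set V} {α : List A} {v : V} (h : v ∈ G.relR S α) :
    G.IsLbl α := by
  cases α with
  | nil => exact ⟨[], List.isChain_nil, rfl⟩
  | cons a w =>
    obtain ⟨p, hp, hm, -⟩ := h
    exact ⟨p, hp, hm⟩

lemma IsLbl.of_append {G : LGraph V Edg A} {α β : List A} (h : G.IsLbl (α ++ β)) :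
    G.IsLbl β := by
  obtain ⟨p, hp, hm⟩ := h
  obtain ⟨p₁, p₂, rfl, -, h₂⟩ := List.map_eq_append_iff.1 hm
  exact ⟨p₂, (List.isChain_append.1 hp).2.1, h₂⟩

end LGraph

namespace LabelledSpace

variable {V Edg A : Type*} (L : LabelledSpace V Edg A)

/-! ### Generators and atoms -/

/-- The collection `𝒢 α` of all relative ranges `r(X, γ)` at the word `α = βγ` of
elements `(β, X, β)` of `F`. -/
def gens (F : Set (Option (List A × Set V))) (α : List A) : Set (Set V) :=
  {Z | ∃ β X γ, some (β, X) ∈ F ∧ α = β ++ γ ∧ Z = L.relR X γ}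

/-- The set of points lying in exactly the same members of `𝒢 α` as `v`. For `v` in `⋃ 𝒢 α` this
is the atom containing `v` of the Boolean ring of sets generated by `𝒢 α`. -/
def atom (F : Set (Option (List A × Set V))) (α : List A) (v : V) : Set V :=
  {w | ∀ Z ∈ L.gens F α, v ∈ Z ↔ w ∈ Z}

/-- The refinement of `F`: the atoms, at each word `α` of `F`, of the points of the sets `X`
with `(α, X, α) ∈ F`. -/
def refinement (F : Set (Option (List A × Set V))) : Set (Option (List A × Set V)) :=
  {p | ∃ α X v, some (α, X) ∈ F ∧ v ∈ X ∧ p = some (α, L.atom F α v)}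

variable {L} {F : Set (Option (List A × Set V))}

lemma mem_refinement {α : List A} {Y : Set V} :
    some (α, Y) ∈ L.refinement F ↔ ∃ X v, some (α, X) ∈ F ∧ v ∈ X ∧ Y = L.atom F α v := by
  constructor
  · rintro ⟨β, X, v, hX, hv, h⟩
    simp only [Option.some.injEq, Prod.mk.injEq] at h
    obtain ⟨rfl, rfl⟩ := h
    exact ⟨X, v, hX, hv, rfl⟩
  · rintro ⟨X, v, hX, hv, rfl⟩
    exact ⟨α, X, v, hX, hv, rfl⟩

lemma mem_gens_self {α : List A} {X : Set V} (h : some (α, X) ∈ F) : X ∈ L.gens F α :=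
  ⟨α, X, [], h, (List.append_nil α).symm, rfl⟩

lemma relR_mem_gens {β γ : List A} {Z : Set V} (h : Z ∈ L.gens F β) :
    L.relR Z γ ∈ L.gens F (β ++ γ) := by
  obtain ⟨δ, X, ε, hX, rfl, rfl⟩ := h
  exact ⟨δ, X, ε ++ γ, hX, List.append_assoc _ _ _, L.toLGraph.relR_relR _ _ _⟩

lemma gens_finite (hF : F.Finite) (α : List A) : (L.gens F α).Finite := by
  refine (hF.image fun p : Option (List A × Set V) =>
    p.elim ∅ fun q => L.relR q.2 (α.drop q.1.length)).subset ?_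
  rintro Z ⟨β, X, γ, hX, rfl, rfl⟩
  exact ⟨_, hX, by simp⟩

lemma mem_atom_self (α : List A) (v : V) : v ∈ L.atom F α v := fun _ _ => Iff.rfl

lemma atom_subset {α : List A} {v : V} {Z : Set V} (hZ : Z ∈ L.gens F α) (hv : v ∈ Z) :
    L.atom F α v ⊆ Z := fun _ hw => (hw Z hZ).1 hv

lemma atom_eq_of_mem {α : List A} {v w : V} (h : w ∈ L.atom F α v) :
    L.atom F α w = L.atom F α v := by
  ext x
  exact forall₂_congr fun Z hZ => by rw [h Z hZ]

/-- Finitely many intersections and relative complements, starting from a set `X ∈ ℬ`, do not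
leave `ℬ`. -/
lemma sep_mem (hc : L.ClosedUnderRelComplements) {X : Set V} (hX : X ∈ L.ℬ) (v : V)
    {𝒢 : Set (Set V)} (hfin : 𝒢.Finite) (h𝒢 : 𝒢 ⊆ L.ℬ) :
    {w | w ∈ X ∧ ∀ Z ∈ 𝒢, v ∈ Z ↔ w ∈ Z} ∈ L.ℬ := by
  induction 𝒢, hfin using Set.Finite.induction_on with
  | empty => simpa using hX
  | @insert Z 𝒢 _ _ ih =>
    have hT := ih ((Set.subset_insert _ _).trans h𝒢)
    have hZ := h𝒢 (Set.mem_insert _ _)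
    by_cases hv : v ∈ Z
    · convert L.inter_mem hT hZ using 1
      ext w
      simp only [Set.forall_mem_insert, Set.mem_ofPred_eq, Set.mem_inter_iff, hv, true_iff]
      tauto
    · convert hc hT hZ using 1
      ext w
      simp only [Set.forall_mem_insert, Set.mem_ofPred_eq, Set.mem_sdiff, hv, false_iff]
      tauto

lemma gens_subset (hF : F ⊆ L.ESnz) {α : List A} {X : Set V} (hX : some (α, X) ∈ F) :
    L.gens F α ⊆ L.ℬ := by
  rintro Z ⟨β, Y, γ, hY, rfl, rfl⟩
  obtain ⟨v, hv⟩ := Set.nonempty_iff_ne_empty.2 (hF hX).1.2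
  exact L.relR_mem (hF hY).1.1.1 γ (L.toLGraph.isLbl_of_mem_relR ((hF hX).1.1.2 hv)).of_append

lemma atom_mem (hc : L.ClosedUnderRelComplements) (hfin : F.Finite) (hF : F ⊆ L.ESnz)
    {α : List A} {X : Set V} (hX : some (α, X) ∈ F) {v : V} (hv : v ∈ X) :
    L.atom F α v ∈ L.ℬ := by
  convert sep_mem hc (hF hX).1.1.1 v (gens_finite hfin α) (gens_subset hF hX) using 1
  ext w
  exact ⟨fun h => ⟨atom_subset (mem_gens_self hX) hv h, h⟩, fun h => h.2⟩

/-! ### Atoms and relative ranges -/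

lemma disjoint_relR (hwlr : L.WeaklyLeftResolving) {S T : Set V} (hS : S ∈ L.ℬ) (hT : T ∈ L.ℬ)
    (h : ∀ x ∈ S, x ∉ T) {γ : List A} {v : V} (hv : v ∈ L.relR S γ) : v ∉ L.relR T γ := by
  intro hv'
  cases γ with
  | nil => exact h v hv hv'
  | cons a w =>
    have hm : v ∈ L.relR (S ∩ T) (a :: w) := by
      rw [hwlr hS hT _ (List.cons_ne_nil _ _)]
      exact ⟨hv, hv'⟩
    rw [show S ∩ T = ∅ from Set.eq_empty_of_forall_notMem fun x hx => h x hx.1 hx.2] at hm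
    exact (L.toLGraph.relR_empty (a :: w)).subset hm

/-- An atom at `βγ` that meets `r(A, γ)`, for an atom `A` at `β`, is contained in it. -/
lemma atom_subset_relR (hwlr : L.WeaklyLeftResolving) (hc : L.ClosedUnderRelComplements)
    (hfin : F.Finite) (hF : F ⊆ L.ESnz) {β γ : List A} {X : Set V} (hX : some (β, X) ∈ F)
    {v : V} (hv : v ∈ X) {u w : V} (hw : w ∈ L.atom F (β ++ γ) u)
    (hwr : w ∈ L.relR (L.atom F β v) γ) :
    L.atom F (β ++ γ) u ⊆ L.relR (L.atom F β v) γ := by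
  intro w' hw'
  -- `w` and `w'` lie in the same sets `r(Z, γ)` with `Z ∈ 𝒢 β`.
  have key : ∀ Z ∈ L.gens F β, (w ∈ L.relR Z γ ↔ w' ∈ L.relR Z γ) := fun Z hZ =>
    (hw _ (relR_mem_gens hZ)).symm.trans (hw' _ (relR_mem_gens hZ))
  have hXg : X ∈ L.gens F β := mem_gens_self hX
  have hXB : X ∈ L.ℬ := (hF hX).1.1.1
  have hA := atom_mem hc hfin hF hX hv
  have hw'X : w' ∈ L.relR X γ :=
    (key X hXg).1 (L.toLGraph.relR_mono (atom_subset hXg hv) γ hwr)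
  -- The source `x` of a path in `X` reaching `w'` turns out to lie in the atom of `v`.
  obtain ⟨x, hxX, hx⟩ := L.toLGraph.exists_of_mem_relR hw'X
  refine L.toLGraph.relR_mono (Set.singleton_subset_iff.2 fun Z hZ => ?_) γ hx
  have hZB : Z ∈ L.ℬ := gens_subset hF hX hZ
  constructor
  · intro hvZ
    by_contra hxZ
    have h1 : w' ∈ L.relR Z γ :=
      (key Z hZ).1 (L.toLGraph.relR_mono (atom_subset hZ hvZ) γ hwr)
    have h2 : w' ∈ L.relR (X \ Z) γ :=
      L.toLGraph.relR_mono
        (Set.singleton_subset_iff.2 (show x ∈ X \ Z from ⟨hxX, hxZ⟩)) γ hx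
    exact disjoint_relR hwlr (hc hXB hZB) hZB (fun _ h => h.2) h2 h1
  · intro hxZ
    by_contra hvZ
    have h1 : w ∈ L.relR Z γ :=
      (key Z hZ).2 (L.toLGraph.relR_mono (Set.singleton_subset_iff.2 hxZ) γ hx)
    exact disjoint_relR hwlr hA hZB (fun y hy hyZ => hvZ ((hy Z hZ).2 hyZ)) hwr h1

/-! ### Finiteness -/

/-- At each word there are only finitely many atoms, since an atom is determined by the subset of
`𝒢 α` consisting of the sets that contain it. -/
lemma range_atom_finite (hfin : F.Finite) (α : List A) : (Set.range (L.atom F α)).Finite := by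
  refine ((gens_finite (L := L) hfin α).finite_subsets.image
    fun s => {w | ∀ Z ∈ L.gens F α, Z ∈ s ↔ w ∈ Z}).subset ?_
  rintro _ ⟨v, rfl⟩
  refine ⟨{Z | Z ∈ L.gens F α ∧ v ∈ Z}, fun Z hZ => hZ.1, ?_⟩
  ext w
  exact forall₂_congr fun Z hZ => by simp [hZ]

lemma refinement_finite (hfin : F.Finite) : (L.refinement F).Finite := by
  refine (hfin.biUnion (t := fun p : Option (List A × Set V) => p.elim ∅ fun q =>
    (fun Y => some (q.1, Y)) '' Set.range (L.atom F q.1)) fun p _ => ?_).subset ?_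
  · cases p with
    | none => exact Set.finite_empty
    | some q => exact (range_atom_finite hfin q.1).image _
  · rintro _ ⟨α, X, v, hX, hv, rfl⟩
    exact Set.mem_biUnion hX ⟨_, ⟨v, rfl⟩, rfl⟩

end LabelledSpace

section
variable {V Edg A : Type*} (L : LabelledSpace V Edg A)

/-- For every finite `F ⊆ E(S)∖{0}` there is a finite `F' ⊆ E(S)∖{0}` such that:
(a) elements of `F'` pairwise multiply to zero or are comparable; (b) every set appearing
in `F` is a (finite, nonempty) union of sets appearing in `F'` with the same word;
(c) `F'` has the same words as `F`; (d) distinct sets of `F'` with the same word are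
disjoint. -/
theorem exists_refined_finite_subset (hwlr : L.WeaklyLeftResolving)
    (hc : L.ClosedUnderRelComplements)
    (F : Set (Option (List A × Set V))) (hFfin : F.Finite) (hF : F ⊆ L.ESnz) :
    ∃ F' : Set (Option (List A × Set V)), F'.Finite ∧ F' ⊆ L.ESnz ∧
      (∀ u ∈ F', ∀ v ∈ F', L.ESmul u v = none ∨ L.ESle u v ∨ L.ESle v u) ∧
      (∀ α : List A, ∀ X : Set V, some (α, X) ∈ F →
        ∃ 𝒞 : Set (Set V), 𝒞.Finite ∧ 𝒞.Nonempty ∧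
          (∀ Y ∈ 𝒞, some (α, Y) ∈ F') ∧ X = ⋃₀ 𝒞) ∧
      ({α : List A | ∃ X : Set V, some (α, X) ∈ F'} =
        {α : List A | ∃ X : Set V, some (α, X) ∈ F}) ∧
      (∀ α : List A, ∀ X Y : Set V,
        some (α, X) ∈ F' → some (α, Y) ∈ F' → X ≠ Y → X ∩ Y = ∅) := by
  refine ⟨L.refinement F, LabelledSpace.refinement_finite hFfin, ?_, ?_, ?_, ?_, ?_⟩
  · rintro _ ⟨α, X, v, hX, hv, rfl⟩
    exact ⟨⟨⟨LabelledSpace.atom_mem hc hFfin hF hX hv,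
      (LabelledSpace.atom_subset (LabelledSpace.mem_gens_self hX) hv).trans (hF hX).1.1.2⟩,
      Set.Nonempty.ne_empty ⟨v, LabelledSpace.mem_atom_self α v⟩⟩, by simp⟩
  · rintro _ ⟨α, X, v, hX, hv, rfl⟩ _ ⟨β, Y, u, hY, hu, rfl⟩
    simp only [LabelledSpace.ESmul]
    split_ifs with h1 h2 h3 h4
    · exact Or.inl rfl
    · obtain ⟨γ, rfl⟩ : α <+: β := h1
      obtain ⟨w, hw1, hw2⟩ := Set.nonempty_iff_ne_empty.2 h2
      simp only [List.drop_left] at hw1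
      exact Or.inr (Or.inr ⟨γ, rfl,
        LabelledSpace.atom_subset_relR hwlr hc hFfin hF hX hv hw2 hw1⟩)
    · exact Or.inl rfl
    · obtain ⟨γ, rfl⟩ : β <+: α := h3
      obtain ⟨w, hw1, hw2⟩ := Set.nonempty_iff_ne_empty.2 h4
      simp only [List.drop_left] at hw2
      exact Or.inr (Or.inl ⟨γ, rfl,
        LabelledSpace.atom_subset_relR hwlr hc hFfin hF hY hu hw1 hw2⟩)
    · exact Or.inl rfl
  · intro α X hX
    refine ⟨L.atom F α '' X, (LabelledSpace.range_atom_finite hFfin α).subset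
      (Set.image_subset_range _ _),
      (Set.nonempty_iff_ne_empty.2 (hF hX).1.2).image _, ?_, ?_⟩
    · rintro _ ⟨v, hv, rfl⟩
      exact ⟨α, X, v, hX, hv, rfl⟩
    · refine Set.Subset.antisymm
        (fun v hv => ⟨_, ⟨v, hv, rfl⟩, LabelledSpace.mem_atom_self α v⟩) ?_
      rintro w ⟨_, ⟨v, hv, rfl⟩, hw⟩
      exact LabelledSpace.atom_subset (LabelledSpace.mem_gens_self hX) hv hw
  · ext α
    constructor
    · rintro ⟨Y, hY⟩
      obtain ⟨X, v, hX, -, -⟩ := LabelledSpace.mem_refinement.1 hY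
      exact ⟨X, hX⟩
    · rintro ⟨X, hX⟩
      obtain ⟨v, hv⟩ := Set.nonempty_iff_ne_empty.2 (hF hX).1.2
      exact ⟨_, α, X, v, hX, hv, rfl⟩
  · intro α X Y hX hY hne
    obtain ⟨X', v, -, -, rfl⟩ := LabelledSpace.mem_refinement.1 hX
    obtain ⟨Y', u, -, -, rfl⟩ := LabelledSpace.mem_refinement.1 hY
    by_contra h
    obtain ⟨w, hw1, hw2⟩ := Set.nonempty_iff_ne_empty.2 h
    exact hne ((LabelledSpace.atom_eq_of_mem hw1).symm.trans (LabelledSpace.atom_eq_of_mem hw2))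

end
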